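/- Consider the i-th per-part subsystem, with the interval (LPV) successor map Fi and the worst-case vertex successor map Fvert_i (x, zi, u) := {(x + Ts • u, c x * zi, u') | u' ∈ U}, where c x := aMax i if x ∈ Obs i and c x := bMax i otherwise. Then the maximal invariant subset of D_i for the interval system Fi equals the maximal invariant subset of D_i for the vertex system Fvert_i; i.e. the robust positively invariant set under region-wise interval uncertainty coincides with the one computed at the region-wise worst-case vertex factors. -/

import Mathlib

/-!
The vertex factor belongs to the factor interval, so every interval-invariant set is
vertex-invariant. Conversely, the dynamics is monotone in the nonnegative coordinate `zᵢ` and the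
vertex factor is the largest one, so if `A ⊆ D` is vertex-invariant then its closure `lowerZ A`
under decreasing `zᵢ ≥ 0` is interval-invariant (`invariant_lowerZ`). It contains `A` and still
lies in `D`, because `D` only restricts `zᵢ` to an interval `[0, zcrit]`.
-/

/-- A set `A` is (robust positively) invariant for the set-valued successor map `F`. -/
def Invariant {α : Type*} (F : α → Set α) (A : Set α) : Prop :=
  ∀ s ∈ A, F s ⊆ A

/-- The maximal invariant subset of `D`: the union of all invariant subsets of `D`. -/
def maxInv {α : Type*} (F : α → Set α) (D : Set α) : Set α :=
  ⋃₀ {A : Set α | A ⊆ D ∧ Invariant F A}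

/-- Region-dependent LPV factor set for one part: decay interval when `x` is in the
observation region, growth interval otherwise. -/
noncomputable def GammaPart (Obsi : Set (ℝ × ℝ)) (aMin aMax bMin bMax : ℝ)
    (x : ℝ × ℝ) : Set ℝ :=
  open Classical in
  if x ∈ Obsi then Set.Icc aMin aMax else Set.Icc bMin bMax

/-- Interval (LPV) successor map of the per-part subsystem on `(x, zᵢ, u) ∈ ℝ² × ℝ × ℝ²`. -/
def Fpart (Ts : ℝ) (U : Set (ℝ × ℝ)) (Obsi : Set (ℝ × ℝ)) (aMin aMax bMin bMax : ℝ)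
    (s : (ℝ × ℝ) × ℝ × (ℝ × ℝ)) : Set ((ℝ × ℝ) × ℝ × (ℝ × ℝ)) :=
  {p | ∃ u' ∈ U, ∃ γ ∈ GammaPart Obsi aMin aMax bMin bMax s.1,
    p = (s.1 + Ts • s.2.2, γ * s.2.1, u')}

/-- Worst-case vertex factor: `aMax` when observed, `bMax` otherwise. -/
noncomputable def cVert (Obsi : Set (ℝ × ℝ)) (aMax bMax : ℝ) (x : ℝ × ℝ) : ℝ :=
  open Classical in
  if x ∈ Obsi then aMax else bMax

/-- Worst-case vertex successor map of the per-part subsystem. -/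
noncomputable def Fvert (Ts : ℝ) (U : Set (ℝ × ℝ)) (Obsi : Set (ℝ × ℝ)) (aMax bMax : ℝ)
    (s : (ℝ × ℝ) × ℝ × (ℝ × ℝ)) : Set ((ℝ × ℝ) × ℝ × (ℝ × ℝ)) :=
  {p | ∃ u' ∈ U, p = (s.1 + Ts • s.2.2, cVert Obsi aMax bMax s.1 * s.2.1, u')}

/-- Per-part constraint set with critical threshold `zc`. -/
def Dpart (X U : Set (ℝ × ℝ)) (zc : ℝ) : Set ((ℝ × ℝ) × ℝ × (ℝ × ℝ)) :=
  {s | s.1 ∈ X ∧ s.2.1 ∈ Set.Icc (0 : ℝ) zc ∧ s.2.2 ∈ U}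

/-- The closure of `A` under decreasing the nonnegative middle coordinate `zᵢ`. -/
def lowerZ (A : Set ((ℝ × ℝ) × ℝ × (ℝ × ℝ))) : Set ((ℝ × ℝ) × ℝ × (ℝ × ℝ)) :=
  {s | 0 ≤ s.2.1 ∧ ∃ z, s.2.1 ≤ z ∧ (s.1, z, s.2.2) ∈ A}

lemma cVert_mem_GammaPart {Obsi : Set (ℝ × ℝ)} {aMin aMax bMin bMax : ℝ}
    (ha : aMin ≤ aMax) (hb : bMin ≤ bMax) (x : ℝ × ℝ) :
    cVert Obsi aMax bMax x ∈ GammaPart Obsi aMin aMax bMin bMax x := by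
  unfold cVert GammaPart
  split_ifs
  · exact Set.right_mem_Icc.2 ha
  · exact Set.right_mem_Icc.2 hb

lemma GammaPart_bounds {Obsi : Set (ℝ × ℝ)} {aMin aMax bMin bMax : ℝ}
    (ha : 0 < aMin) (hb : 0 < bMin) {x : ℝ × ℝ} {γ : ℝ}
    (hγ : γ ∈ GammaPart Obsi aMin aMax bMin bMax x) :
    0 ≤ γ ∧ γ ≤ cVert Obsi aMax bMax x := by
  unfold GammaPart at hγ
  unfold cVert
  split_ifs at hγ ⊢
  · exact ⟨ha.le.trans hγ.1, hγ.2⟩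
  · exact ⟨hb.le.trans hγ.1, hγ.2⟩

/-- The vertex successor of a dominating state dominates every interval successor, so lowering
turns vertex invariance into interval invariance. -/
lemma invariant_lowerZ {Ts : ℝ} {U Obsi : Set (ℝ × ℝ)} {aMin aMax bMin bMax : ℝ}
    (ha : 0 < aMin) (hb : 0 < bMin) {A : Set ((ℝ × ℝ) × ℝ × (ℝ × ℝ))}
    (hA : Invariant (Fvert Ts U Obsi aMax bMax) A) :
    Invariant (Fpart Ts U Obsi aMin aMax bMin bMax) (lowerZ A) := by
  rintro ⟨x, z, u⟩ ⟨hz, z', hzz', hmem⟩ p ⟨u', hu', γ, hγ, rfl⟩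
  obtain ⟨h0, hc⟩ := GammaPart_bounds ha hb hγ
  exact ⟨mul_nonneg h0 hz, cVert Obsi aMax bMax x * z',
    mul_le_mul hc hzz' hz (h0.trans hc), hA _ hmem ⟨u', hu', rfl⟩⟩

/-- The maximal robust positively invariant subset of `D_i` for the interval (LPV)
per-part system coincides with the one computed at the region-wise worst-case
vertex factors. -/
theorem rpi_interval_eq_rpi_vertex (Ts : ℝ) (hTs : 0 < Ts)
    (X U Obsi : Set (ℝ × ℝ)) (zcrit aMin aMax bMin bMax : ℝ)
    (hzcrit : 0 < zcrit)
    (haMin : 0 < aMin) (haMinMax : aMin ≤ aMax)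
    (hbMin : 0 < bMin) (hbMinMax : bMin ≤ bMax) :
    maxInv (Fpart Ts U Obsi aMin aMax bMin bMax) (Dpart X U zcrit) =
      maxInv (Fvert Ts U Obsi aMax bMax) (Dpart X U zcrit) := by
  apply Set.Subset.antisymm
  · rintro s ⟨A, ⟨hAD, hA⟩, hs⟩
    refine ⟨A, ⟨hAD, ?_⟩, hs⟩
    rintro t ht p ⟨u', hu', rfl⟩
    exact hA t ht ⟨u', hu', _, cVert_mem_GammaPart haMinMax hbMinMax t.1, rfl⟩
  · rintro s ⟨A, ⟨hAD, hA⟩, hs⟩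
    refine ⟨lowerZ A, ⟨?_, invariant_lowerZ haMin hbMin hA⟩,
      (hAD hs).2.1.1, s.2.1, le_rfl, hs⟩
    rintro t ⟨ht, z, htz, hz⟩
    obtain ⟨hx, hzI, hu⟩ := hAD hz
    exact ⟨hx, ⟨ht, htz.trans hzI.2⟩, hu⟩
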